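/- arXiv:2401.05725 — 4 statements merged into one kernel-verified Lean document; each statement's English description precedes it below -/
import Mathlib

section
/- For every real constant c > 0, the function (x, y) ↦ Real.logb 2 (1 + c / (x * y)) is jointly convex on the set {(x, y) : x > 0 ∧ y > 0} ⊆ ℝ × ℝ. -/
/-!
A weighted arithmetic mean dominates the corresponding geometric mean, so replacing both coordinates
of a convex combination by weighted geometric means only increases `c / (x * y)`; for `A = c / (x y)`
and `B = c / (u v)` this bounds the value at the combination with weights `a`, `b` by `A ^ a * B ^ b`.
The two-term Hölder inequality `1 + A ^ a * B ^ b ≤ (1 + A) ^ a * (1 + B) ^ b`, which says that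
`s ↦ log (1 + exp s)` is convex, then gives the claim after taking logarithms.
-/

/-- Hölder's inequality for the two-term sums `1 + A` and `1 + B`. -/
lemma one_add_rpow_mul_rpow_le {A B a b : ℝ} (hA : 0 < A) (hB : 0 < B) (ha : 0 ≤ a) (hb : 0 ≤ b)
    (hab : a + b = 1) : 1 + A ^ a * B ^ b ≤ (1 + A) ^ a * (1 + B) ^ b := by
  have hA' : 0 < 1 + A := by linarith
  have hB' : 0 < 1 + B := by linarith
  -- AM-GM for the normalised entries `1 / (1 + A)`, `1 / (1 + B)` and `A / (1 + A)`, `B / (1 + B)`: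
  -- the right-hand sides add up to `a + b = 1`.
  have h1 := Real.geom_mean_le_arith_mean2_weighted ha hb (p₁ := 1 / (1 + A)) (p₂ := 1 / (1 + B))
    (by positivity) (by positivity) hab
  have h2 := Real.geom_mean_le_arith_mean2_weighted ha hb (p₁ := A / (1 + A)) (p₂ := B / (1 + B))
    (by positivity) (by positivity) hab
  rw [Real.div_rpow zero_le_one hA'.le, Real.div_rpow zero_le_one hB'.le, Real.one_rpow,
    Real.one_rpow] at h1
  rw [Real.div_rpow hA.le hA'.le, Real.div_rpow hB.le hB'.le] at h2
  have hsum : a * (1 / (1 + A)) + b * (1 / (1 + B)) + (a * (A / (1 + A)) + b * (B / (1 + B))) = 1 := by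
    rw [← hab]
    field_simp
    ring
  have hP : 0 < (1 + A) ^ a := by positivity
  have hQ : 0 < (1 + B) ^ b := by positivity
  have key : (1 + A ^ a * B ^ b) / ((1 + A) ^ a * (1 + B) ^ b) ≤ 1 := by
    calc _ = 1 / (1 + A) ^ a * (1 / (1 + B) ^ b) + A ^ a / (1 + A) ^ a * (B ^ b / (1 + B) ^ b) := by
          field_simp
      _ ≤ 1 := by linarith
  rwa [div_le_one (by positivity)] at key

theorem logb_one_add_div_mul_convexOn (c : ℝ) (hc : 0 < c) :
    ConvexOn ℝ {p : ℝ × ℝ | 0 < p.1 ∧ 0 < p.2}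
      (fun p : ℝ × ℝ => Real.logb 2 (1 + c / (p.1 * p.2))) := by
  refine ⟨((convex_Ioi (0 : ℝ)).prod (convex_Ioi (0 : ℝ))), ?_⟩
  rintro ⟨x, y⟩ ⟨hx, hy⟩ ⟨u, v⟩ ⟨hu, hv⟩ a b ha hb hab
  simp only [Prod.smul_mk, Prod.mk_add_mk, smul_eq_mul] at hx hy hu hv ⊢
  have hz := Real.geom_mean_le_arith_mean2_weighted ha hb hx.le hu.le hab
  have hw := Real.geom_mean_le_arith_mean2_weighted ha hb hy.le hv.le hab
  have hA : 0 < c / (x * y) := by positivity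
  have hB : 0 < c / (u * v) := by positivity
  have hz0 : 0 < x ^ a * u ^ b := by positivity
  have hw0 : 0 < y ^ a * v ^ b := by positivity
  have hz1 := hz0.trans_le hz
  have hw1 := hw0.trans_le hw
  have hle : c / ((a * x + b * u) * (a * y + b * v)) ≤ (c / (x * y)) ^ a * (c / (u * v)) ^ b := by
    calc _ ≤ c / ((x ^ a * u ^ b) * (y ^ a * v ^ b)) := by gcongr
      _ = (c ^ a * c ^ b) / ((x ^ a * u ^ b) * (y ^ a * v ^ b)) := by
          rw [← Real.rpow_add hc, hab, Real.rpow_one]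
      _ = _ := by
          rw [Real.div_rpow hc.le (by positivity), Real.div_rpow hc.le (by positivity),
            Real.mul_rpow hx.le hy.le, Real.mul_rpow hu.le hv.le, div_mul_div_comm]
          congr 1
          ring
  have hA' : 0 < 1 + c / (x * y) := by linarith
  have hB' : 0 < 1 + c / (u * v) := by linarith
  rw [← Real.logb_rpow_eq_mul_logb_of_pos hA', ← Real.logb_rpow_eq_mul_logb_of_pos hB',
    ← Real.logb_mul (by positivity) (by positivity)]
  refine Real.logb_le_logb_of_le one_lt_two (by positivity) ?_
  linarith [one_add_rpow_mul_rpow_le hA hB ha hb hab]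
end

section
/- Let c > 0, s > 0 (playing the role of σ²), and λ > 0, λ₀ > 0 be real numbers. Then Real.logb 2 (1 + c / (λ * s)) ≥ Real.logb 2 (1 + c / (λ₀ * s)) + (λ - λ₀) * (-c / (Real.log 2 * (c + λ₀ * s) * λ₀)). -/
/-!
After multiplying by `log 2`, the claim bounds `log R` from below, where
`R = (1 + c / (lam * s)) / (1 + c / (lam₀ * s))`. The inequality `1 - R⁻¹ ≤ log R` gives
`log R ≥ -(lam - lam₀) * c / ((c + lam * s) * lam₀)`, and this exceeds the tangent term
`-(lam - lam₀) * c / ((c + lam₀ * s) * lam₀)` by the nonnegative quantity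
`c * s * (lam - lam₀) ^ 2 / ((c + lam * s) * (c + lam₀ * s) * lam₀)`.
-/

theorem sca_lower_bound_uav_rate
    (c s lam lam₀ : ℝ) (hc : 0 < c) (hs : 0 < s) (hlam : 0 < lam) (hlam₀ : 0 < lam₀) :
    Real.logb 2 (1 + c / (lam * s))
      ≥ Real.logb 2 (1 + c / (lam₀ * s))
        + (lam - lam₀) * (-c / (Real.log 2 * (c + lam₀ * s) * lam₀)) := by
  have hL : 0 < Real.log 2 := Real.log_pos (by norm_num)
  have hA : 0 < 1 + c / (lam * s) := by positivity
  have hB : 0 < 1 + c / (lam₀ * s) := by positivity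
  have hlog := Real.one_sub_inv_le_log_of_pos (div_pos hA hB)
  rw [Real.log_div hA.ne' hB.ne'] at hlog
  have hgap : 1 - ((1 + c / (lam * s)) / (1 + c / (lam₀ * s)))⁻¹
      = (lam - lam₀) * (-c / ((c + lam₀ * s) * lam₀))
        + c * s * (lam - lam₀) ^ 2 / ((c + lam * s) * (c + lam₀ * s) * lam₀) := by
    have h₁ : 1 + c / (lam * s) = (c + lam * s) / (lam * s) := by field_simp; ring
    have h₂ : 1 + c / (lam₀ * s) = (c + lam₀ * s) / (lam₀ * s) := by field_simp; ring
    have h₃ : c + lam * s ≠ 0 := by positivity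
    have h₄ : c + lam₀ * s ≠ 0 := by positivity
    rw [h₁, h₂]
    field_simp
    ring
  have hnonneg : 0 ≤ c * s * (lam - lam₀) ^ 2 / ((c + lam * s) * (c + lam₀ * s) * lam₀) := by
    positivity
  have hslope : (lam - lam₀) * (-c / (Real.log 2 * (c + lam₀ * s) * lam₀))
      = (lam - lam₀) * (-c / ((c + lam₀ * s) * lam₀)) / Real.log 2 := by
    rw [mul_assoc, mul_comm (Real.log 2), ← div_div, mul_div_assoc]
  rw [ge_iff_le, hslope, Real.logb, Real.logb, ← add_div]
  exact div_le_div_of_nonneg_right (by linarith) hL.le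
end

section
/- Let c > 0, s > 0 (playing the role of σ²), and x, y, x₀, y₀ > 0 be real numbers. Then Real.logb 2 (1 + c / (x * y * s)) ≥ Real.logb 2 (1 + c / (x₀ * y₀ * s)) + (x - x₀) * (-c / (Real.log 2 * x₀ * (c + x₀ * y₀ * s))) + (y - y₀) * (-c / (Real.log 2 * y₀ * (c + x₀ * y₀ * s))). -/
/-! With `a = x / x₀`, `b = y / y₀`, `p = c / (c + x₀ y₀ s)` and `q = 1 - p`, the two arguments of
the logarithm differ by the factor `(p + q a b) / (a b)`, and the linear terms are
`-p (a - 1) / log 2` and `-p (b - 1) / log 2`. Concavity of `log` gives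
`log (p + q a b) ≥ q log (a b)`, so the logarithm of the factor is at least
`-p log (a b) = -p log a - p log b`, and `log t ≤ t - 1` finishes. -/

/-- The tangent-plane bound in normalized variables, where the base point is `(1, 1)`. -/
lemma log_ratio_ge {a b p q : ℝ} (ha : 0 < a) (hb : 0 < b) (hp : 0 ≤ p) (hq : 0 ≤ q)
    (hpq : p + q = 1) :
    -p * (a - 1) + -p * (b - 1) ≤ Real.log (p + q * (a * b)) - Real.log (a * b) := by
  have hab : 0 < a * b := mul_pos ha hb
  have hconc := strictConcaveOn_log_Ioi.concaveOn.2 (Set.mem_Ioi.2 one_pos)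
    (Set.mem_Ioi.2 hab) hp hq hpq
  simp only [smul_eq_mul, Real.log_one, mul_one, mul_zero, zero_add] at hconc
  have hla := mul_le_mul_of_nonneg_left (Real.log_le_sub_one_of_pos ha) hp
  have hlb := mul_le_mul_of_nonneg_left (Real.log_le_sub_one_of_pos hb) hp
  obtain rfl : q = 1 - p := by linarith
  rw [Real.log_mul ha.ne' hb.ne'] at hconc ⊢
  linarith

theorem sca_lower_bound_bs_rate
    (c s x y x₀ y₀ : ℝ) (hc : 0 < c) (hs : 0 < s)
    (hx : 0 < x) (hy : 0 < y) (hx₀ : 0 < x₀) (hy₀ : 0 < y₀) :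
    Real.logb 2 (1 + c / (x * y * s))
      ≥ Real.logb 2 (1 + c / (x₀ * y₀ * s))
        + (x - x₀) * (-c / (Real.log 2 * x₀ * (c + x₀ * y₀ * s)))
        + (y - y₀) * (-c / (Real.log 2 * y₀ * (c + x₀ * y₀ * s))) := by
  have hl : 0 < Real.log 2 := Real.log_pos one_lt_two
  have hD : 0 < c + x₀ * y₀ * s := by positivity
  have key := log_ratio_ge (a := x / x₀) (b := y / y₀) (p := c / (c + x₀ * y₀ * s))
    (q := x₀ * y₀ * s / (c + x₀ * y₀ * s)) (by positivity) (by positivity) (by positivity)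
    (by positivity) (by field_simp)
  rw [← Real.log_div (by positivity) (by positivity)] at key
  have hfactor : 1 + c / (x * y * s) = (1 + c / (x₀ * y₀ * s)) *
      ((c / (c + x₀ * y₀ * s) + x₀ * y₀ * s / (c + x₀ * y₀ * s) * (x / x₀ * (y / y₀))) /
        (x / x₀ * (y / y₀))) := by
    field_simp
    ring
  have hlin : (x - x₀) * (-c / (Real.log 2 * x₀ * (c + x₀ * y₀ * s)))
      + (y - y₀) * (-c / (Real.log 2 * y₀ * (c + x₀ * y₀ * s)))
      = (-(c / (c + x₀ * y₀ * s)) * (x / x₀ - 1)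
        + -(c / (c + x₀ * y₀ * s)) * (y / y₀ - 1)) / Real.log 2 := by
    field_simp
  rw [ge_iff_le, add_assoc, hlin, hfactor, Real.logb, Real.logb,
    Real.log_mul (by positivity) (by positivity), ← add_div]
  gcongr
end

section
/- Let μ > 0, v₀ > 0 and v be real numbers. Then μ² + v²/v₀² ≥ 1/μ² if and only if μ² ≥ Real.sqrt (1 + v⁴ / (4 * v₀⁴)) - v² / (2 * v₀²). -/
theorem induced_power_constraint_equiv
    (μ v₀ v : ℝ) (hμ : 0 < μ) (hv₀ : 0 < v₀) :
    μ ^ 2 + v ^ 2 / v₀ ^ 2 ≥ 1 / μ ^ 2 ↔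
      μ ^ 2 ≥ Real.sqrt (1 + v ^ 4 / (4 * v₀ ^ 4)) - v ^ 2 / (2 * v₀ ^ 2) := by
  -- With `a = μ²` and `c = v² / (2 v₀²)`, both sides say `1 + c² ≤ (a + c)²`.
  have h₁ : v ^ 2 / v₀ ^ 2 = 2 * (v ^ 2 / (2 * v₀ ^ 2)) := by field_simp
  have h₂ : v ^ 4 / (4 * v₀ ^ 4) = (v ^ 2 / (2 * v₀ ^ 2)) ^ 2 := by
    rw [div_pow]
    ring
  have hc : 0 ≤ v ^ 2 / (2 * v₀ ^ 2) := by positivity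
  have ha : 0 < μ ^ 2 := by positivity
  rw [h₁, h₂]
  generalize v ^ 2 / (2 * v₀ ^ 2) = c at hc ⊢
  generalize μ ^ 2 = a at ha ⊢
  rw [ge_iff_le, ge_iff_le, div_le_iff₀ ha, sub_le_iff_le_add,
    Real.sqrt_le_left (by positivity)]
  constructor <;> intro h <;> linarith
end
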